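/- Let H be a real Hilbert space, let η > 0, L > 0, M ≥ 0, η_g ≥ 0, let K be a finite index set with nonnegative weights p : K → ℝ summing to 1, let F : H → ℝ be differentiable and M-Lipschitz continuous, and for each k ∈ K let F_k : H → ℝ be differentiable with ∇F_k L-Lipschitz and ‖∇F_k(x) − ∇F(x)‖ ≤ δ_k for all x ∈ H, where δ_k ≥ 0. Fix w₀ ∈ H and define, for each k, w^k(0) = w₀ and w^k(e) = w^k(e−1) − η∇F_k(w^k(e−1)), and define v(0) = w₀ and v(e) = v(e−1) − η∇F(v(e−1)). Let I be a finite index set and for each l ∈ I let u_l ∈ H with u_l ≠ 0, and define w̃ = Σ_{k∈K} p_k·w^k(E) + η_g · Σ_{l∈I} u_l/‖u_l‖ for some E ∈ ℕ. Then |F(w̃) − F(v(E))| ≤ (M·(Σ_{k∈K} p_k·δ_k)/L)·((ηL + 1)^E − 1) + M·η_g·|I|. -/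

import Mathlib

/-!
A step `x ↦ x - η • g x` along an `L`-Lipschitz field `g` is `(1 + ηL)`-Lipschitz, and perturbing
`g` by at most `δ` moves each step by at most `ηδ`. Two such runs from a common start are therefore
at most `ηδ ∑_{e < E} (1 + ηL)^e = (δ / L) ((ηL + 1)^E - 1)` apart after `E` steps. Convexity of
the distance carries this over to the weighted average of the clients, every other group then
displaces the average by at most `η_g`, and the group loss multiplies distances by at most `M`.
-/

open scoped NNReal

theorem eq_iterate_of_forall_eq_apply_pred {α : Type*} {f : α → α} {x : ℕ → α}
    (hx : ∀ n, 1 ≤ n → x n = f (x (n - 1))) (n : ℕ) : x n = f^[n] (x 0) := by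
  induction n with
  | zero => rfl
  | succ n ih =>
    rw [Function.iterate_succ_apply', ← ih]
    exact hx (n + 1) n.succ_pos

theorem dist_iterate_iterate_le {α : Type*} [PseudoMetricSpace α] {f g : α → α} {K : ℝ≥0} {ε : ℝ}
    (hf : LipschitzWith K f) (hfg : ∀ x, dist (f x) (g x) ≤ ε) (x y : α) (n : ℕ) :
    dist (f^[n] x) (g^[n] y) ≤ K ^ n * dist x y + ε * ∑ i ∈ Finset.range n, (K : ℝ) ^ i := by
  induction n with
  | zero => simp
  | succ n ih =>
    rw [Function.iterate_succ_apply', Function.iterate_succ_apply']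
    calc dist (f (f^[n] x)) (g (g^[n] y))
        ≤ dist (f (f^[n] x)) (f (g^[n] y)) + dist (f (g^[n] y)) (g (g^[n] y)) :=
          dist_triangle _ _ _
      _ ≤ K * dist (f^[n] x) (g^[n] y) + ε := add_le_add (hf.dist_le_mul _ _) (hfg _)
      _ ≤ K * (K ^ n * dist x y + ε * ∑ i ∈ Finset.range n, (K : ℝ) ^ i) + ε := by gcongr
      _ = K ^ (n + 1) * dist x y + ε * ∑ i ∈ Finset.range (n + 1), (K : ℝ) ^ i := by
          rw [geom_sum_succ]
          ring

section

variable {V : Type*} [SeminormedAddCommGroup V] [NormedSpace ℝ V]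

theorem dist_sum_smul_le {ι : Type*} {s : Finset ι} {p r : ι → ℝ} {x : ι → V} {y : V}
    (hp : ∀ i ∈ s, 0 ≤ p i) (hsum : ∑ i ∈ s, p i = 1) (hr : ∀ i ∈ s, dist (x i) y ≤ r i) :
    dist (∑ i ∈ s, p i • x i) y ≤ ∑ i ∈ s, p i * r i :=
  calc dist (∑ i ∈ s, p i • x i) y
      ≤ ∑ i ∈ s, p i * dist (x i) y :=
        (convexOn_dist y convex_univ).map_sum_le hp hsum fun _ _ => Set.mem_univ _
    _ ≤ ∑ i ∈ s, p i * r i :=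
        Finset.sum_le_sum fun i hi => mul_le_mul_of_nonneg_left (hr i hi) (hp i hi)

/-- One step of gradient descent with learning rate `η`. The gradient is replaced by an arbitrary
vector field `g`, so that a run of `n` local epochs is `(descentStep η g)^[n]`. -/
def descentStep (η : ℝ) (g : V → V) (x : V) : V :=
  x - η • g x

theorem lipschitzWith_descentStep {g : V → V} {L : ℝ≥0} (hg : LipschitzWith L g) (η : ℝ) :
    LipschitzWith (1 + ‖η‖₊ * L) (descentStep η g) :=
  LipschitzWith.id.sub ((lipschitzWith_smul η).comp hg)

theorem dist_descentStep_descentStep (η : ℝ) (g h : V → V) (x : V) :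
    dist (descentStep η g x) (descentStep η h x) = |η| * dist (g x) (h x) := by
  rw [descentStep, descentStep, dist_sub_left, dist_smul₀, Real.norm_eq_abs]

theorem dist_iterate_descentStep_le {η L δ : ℝ} (hη : 0 ≤ η) (hL : 0 < L) {g h : V → V}
    (hg : ∀ x y, ‖g x - g y‖ ≤ L * ‖x - y‖) (hgh : ∀ x, ‖g x - h x‖ ≤ δ) (x : V) (n : ℕ) :
    dist ((descentStep η g)^[n] x) ((descentStep η h)^[n] x) ≤
      δ / L * ((η * L + 1) ^ n - 1) := by
  have hlip : LipschitzWith L.toNNReal g := LipschitzWith.of_dist_le' fun x y => by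
    simpa only [dist_eq_norm] using hg x y
  have hstep (y : V) : dist (descentStep η g y) (descentStep η h y) ≤ η * δ := by
    rw [dist_descentStep_descentStep, abs_of_nonneg hη, dist_eq_norm]
    exact mul_le_mul_of_nonneg_left (hgh y) hη
  have hconst : ((1 + ‖η‖₊ * L.toNNReal : ℝ≥0) : ℝ) = η * L + 1 := by
    simp [abs_of_nonneg hη, hL.le, add_comm]
  have hgeom : η * L * ∑ i ∈ Finset.range n, (η * L + 1) ^ i = (η * L + 1) ^ n - 1 := by
    simpa using mul_geom_sum (η * L + 1) n
  calc dist ((descentStep η g)^[n] x) ((descentStep η h)^[n] x)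
      ≤ η * δ * ∑ i ∈ Finset.range n, (η * L + 1) ^ i := by
        simpa [hconst] using
          dist_iterate_iterate_le (lipschitzWith_descentStep hlip η) hstep x x n
    _ = δ / L * (η * L * ∑ i ∈ Finset.range n, (η * L + 1) ^ i) := by field_simp
    _ = δ / L * ((η * L + 1) ^ n - 1) := by rw [hgeom]

theorem fedgroup_intergroup_bound_general {X : Type*} [PseudoMetricSpace X]
    {η L M ηg : ℝ} (hη : 0 ≤ η) (hL : 0 < L) (hM : 0 ≤ M) (hηg : 0 ≤ ηg)
    {K : Type*} [Fintype K]
    {p : K → ℝ} (hp : ∀ k, 0 ≤ p k) (hsum : ∑ k, p k = 1) {δ : K → ℝ}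
    {F : V → X} (hF : ∀ x y, dist (F x) (F y) ≤ M * ‖x - y‖)
    {g : V → V} {gk : K → V → V}
    (hlip : ∀ k, ∀ x y, ‖gk k x - gk k y‖ ≤ L * ‖x - y‖)
    (hdiv : ∀ k, ∀ x, ‖gk k x - g x‖ ≤ δ k)
    {w₀ : V} {w : K → ℕ → V} {v : ℕ → V}
    (hw0 : ∀ k, w k 0 = w₀) (hv0 : v 0 = w₀)
    (hw : ∀ k, ∀ e, 1 ≤ e → w k e = w k (e - 1) - η • gk k (w k (e - 1)))
    (hv : ∀ e, 1 ≤ e → v e = v (e - 1) - η • g (v (e - 1)))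
    {I : Type*} [Fintype I] {d : I → V} (hd : ∀ l, ‖d l‖ ≤ 1) (E : ℕ) :
    dist (F ((∑ k, p k • w k E) + ηg • ∑ l, d l)) (F (v E)) ≤
      M * (∑ k, p k * δ k) / L * ((η * L + 1) ^ E - 1) + M * ηg * Fintype.card I := by
  have hclient (k : K) : dist (w k E) (v E) ≤ δ k / L * ((η * L + 1) ^ E - 1) := by
    rw [eq_iterate_of_forall_eq_apply_pred (f := descentStep η (gk k)) (hw k),
      eq_iterate_of_forall_eq_apply_pred (f := descentStep η g) hv, hw0, hv0]
    exact dist_iterate_descentStep_le hη hL (hlip k) (hdiv k) w₀ E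
  have hintra := dist_sum_smul_le (fun k _ => hp k) hsum fun k _ => hclient k
  have hinter : ‖ηg • ∑ l, d l‖ ≤ ηg * Fintype.card I := by
    rw [norm_smul, Real.norm_of_nonneg hηg]
    gcongr
    simpa using norm_sum_le_of_le Finset.univ fun l _ => hd l
  calc dist (F ((∑ k, p k • w k E) + ηg • ∑ l, d l)) (F (v E))
      ≤ M * ‖(∑ k, p k • w k E) + ηg • ∑ l, d l - v E‖ := hF _ _
    _ ≤ M * (dist (∑ k, p k • w k E) (v E) + ‖ηg • ∑ l, d l‖) := by
        rw [add_sub_right_comm, dist_eq_norm]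
        gcongr
        exact norm_add_le _ _
    _ ≤ M * (∑ k, p k * (δ k / L * ((η * L + 1) ^ E - 1)) + ηg * Fintype.card I) := by
        gcongr
    _ = M * (∑ k, p k * δ k) / L * ((η * L + 1) ^ E - 1) + M * ηg * Fintype.card I := by
        simp only [← mul_assoc, ← mul_div_assoc, ← Finset.sum_mul, ← Finset.sum_div]
        ring

end

/-- Eq. (17): the convergence bound of FedGroup with inter-group aggregation,
with the Lipschitz constant `M` carried through the inter-group term. -/
theorem fedgroup_intergroup_bound
    {H : Type*} [NormedAddCommGroup H] [InnerProductSpace ℝ H] [CompleteSpace H]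
    (η L M ηg : ℝ) (hη : 0 < η) (hL : 0 < L) (hM : 0 ≤ M) (hηg : 0 ≤ ηg)
    {K : Type*} [Fintype K]
    (p : K → ℝ) (hp : ∀ k, 0 ≤ p k) (hsum : ∑ k, p k = 1)
    (δ : K → ℝ) (hδ : ∀ k, 0 ≤ δ k)
    (F : H → ℝ) (hF : Differentiable ℝ F)
    (hFlip : ∀ w v : H, |F w - F v| ≤ M * ‖w - v‖)
    (Fk : K → H → ℝ) (hFk : ∀ k, Differentiable ℝ (Fk k))
    (hlip : ∀ k, ∀ w v : H, ‖gradient (Fk k) w - gradient (Fk k) v‖ ≤ L * ‖w - v‖)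
    (hdiv : ∀ k, ∀ x : H, ‖gradient (Fk k) x - gradient F x‖ ≤ δ k)
    (w₀ : H) (w : K → ℕ → H) (v : ℕ → H)
    (hw0 : ∀ k, w k 0 = w₀) (hv0 : v 0 = w₀)
    (hw : ∀ k, ∀ e : ℕ, 1 ≤ e → w k e = w k (e - 1) - η • gradient (Fk k) (w k (e - 1)))
    (hv : ∀ e : ℕ, 1 ≤ e → v e = v (e - 1) - η • gradient F (v (e - 1)))
    {I : Type*} [Fintype I]
    (u : I → H) (hu : ∀ l, u l ≠ 0)
    (E : ℕ) :
    |F ((∑ k, p k • w k E) + ηg • ∑ l, ‖u l‖⁻¹ • u l) - F (v E)| ≤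
      M * (∑ k, p k * δ k) / L * ((η * L + 1) ^ E - 1) +
        M * ηg * (Fintype.card I) :=
  fedgroup_intergroup_bound_general (F := F) (d := fun l => ‖u l‖⁻¹ • u l) hη.le hL hM hηg hp hsum
    hFlip hlip hdiv hw0 hv0 hw hv (fun l => (norm_smul_inv_norm (𝕜 := ℝ) (hu l)).le) E
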